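/- Let m ≥ 0 and r ≥ 2 be integers and λ_1,…,λ_r, α_1,…,α_r ∈ [0,1), and set μ_2 := λ_1 + λ_2. For every compact subset K of U_r(m+1), the family of functions (s_1,…,s_r) ↦ (s_1)_k (α_2−α_1)^{k+1} · e(μ_2 n_2) e(λ_3 n_3) ⋯ e(λ_r n_r) / ((n_2+α_2)^{s_1+s_2+k+1} (n_3+α_3)^{s_3} ⋯ (n_r+α_r)^{s_r}), indexed by integer tuples n_2 > ⋯ > n_r > 0 and integers k ≥ m−1, converges normally on K; in particular (taking m = 0) it converges normally on compact subsets of U_r. -/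

import Mathlib

/-!
Write `r + 2` for the depth, `L i = log (n_{i+2} + α_{i+2})` for `0 ≤ i ≤ r` and `p = k + 1 ≥ m`.
The strict decrease of `n` and `α ∈ [0, 1)` make `L` decreasing and nonnegative, so the factor
`(n_2 + α_2)^{-p}` is at most `(n_2 + α_2)^{-m}`. What is left of the exponents has real parts
`σ i` (`shiftedExp`) with partial sums `σ 0 + ⋯ + σ i > i + 1`; by compactness there is one `η > 0`
such that these partial sums are at least `(i + 1) (1 + η)` on all of `K` (`exists_uniform_margin`).
Summation by parts (`sum_mul_nonneg`) then gives `∑ σ i * L i ≥ (1 + η) * ∑ L i`, that is, the Lerch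
term is bounded on `K` by `∏ n_i ^ (-(1 + η))`, uniformly in `k` (`norm_lerchTerm_le`), and this is
summable over all tuples (`summable_prod_pi`). The remaining factor is bounded by
`(∏_{j < p} (M + j) / p!) * |α_2 - α_1| ^ p` where `M` bounds `|s_1|` on `K`; it is summable over
`p` by the ratio test, since `|α_2 - α_1| < 1` (`summable_pochBound`).
A product of summable majorants in the independent variables `n` and `k` is summable.
-/


open Complex

/-- `e(a) = e^{2πia}`. -/
noncomputable def eR (a : ℝ) : ℂ := Complex.exp (2 * Real.pi * Complex.I * a)

/-- For a real `b > 0` and `z ∈ ℂ`, `b^z := exp (z log b)` (real logarithm). -/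
noncomputable def rpowC (b : ℝ) (z : ℂ) : ℂ := Complex.exp (z * Real.log b)

/-- Strictly decreasing tuples of positive integers `n_1 > n_2 > ⋯ > n_r > 0`. -/
def DTuple (r : ℕ) : Type := {n : Fin r → ℕ // StrictAnti n ∧ ∀ i, 0 < n i}

/-- The term `e(λ_1 n_1)⋯e(λ_r n_r) / ((n_1+α_1)^{s_1}⋯(n_r+α_r)^{s_r})`. -/
noncomputable def lerchTerm {r : ℕ} (lam al : Fin r → ℝ) (s : Fin r → ℂ)
    (n : Fin r → ℕ) : ℂ :=
  (∏ i, eR (lam i * n i)) / ∏ i, rpowC ((n i : ℝ) + al i) (s i)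

/-- The multiple Lerch zeta function (as a sum over strictly decreasing tuples). -/
noncomputable def multipleLerch {r : ℕ} (lam al : Fin r → ℝ) (s : Fin r → ℂ) : ℂ :=
  ∑' n : DTuple r, lerchTerm lam al s n.1

/-- The term `(n_1+α_1)^{-s_1}⋯(n_r+α_r)^{-s_r}`. -/
noncomputable def hzTerm {r : ℕ} (al : Fin r → ℝ) (s : Fin r → ℂ) (n : Fin r → ℕ) : ℂ :=
  ∏ i, rpowC ((n i : ℝ) + al i) (-(s i))

/-- The multiple Hurwitz zeta function (as a sum over strictly decreasing tuples). -/
noncomputable def multipleHurwitz {r : ℕ} (al : Fin r → ℝ) (s : Fin r → ℂ) : ℂ :=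
  ∑' n : DTuple r, hzTerm al s n.1

/-- `U_r(m) = {s ∈ ℂ^r : Re(s_1+⋯+s_i) > i − m for 1 ≤ i ≤ r}` (0-based indexing). -/
def Ur (r : ℕ) (m : ℤ) : Set (Fin r → ℂ) :=
  {s | ∀ i : Fin r, ((i : ℕ) + 1 - m : ℝ) < (∑ j ∈ Finset.Iic i, s j).re}

/-- `(s)_k = s(s+1)⋯(s+k)/(k+1)!` for `k ≥ 0` and `(s)_k = 1` for `k < 0`. -/
noncomputable def pochZ (s : ℂ) (k : ℤ) : ℂ :=
  if 0 ≤ k then (∏ j ∈ Finset.range (k.toNat + 1), (s + j)) / (Nat.factorial (k.toNat + 1))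
  else 1

/-- The hyperplane `H_{i,k} : s_1 + ⋯ + s_i = i − k` (0-based: `i` here is paper's `i−1`). -/
def Hplane (r : ℕ) (i : Fin r) (k : ℕ) : Set (Fin r → ℂ) :=
  {s | ∑ j ∈ Finset.Iic i, s j = ((i : ℕ) + 1 : ℂ) - k}

/-- The union of the hyperplanes `H_{i,k}` for `(i,k)` satisfying the predicate `P`. -/
def polarSet {r : ℕ} (P : Fin r → ℕ → Prop) : Set (Fin r → ℂ) :=
  {s | ∃ i k, P i k ∧ s ∈ Hplane r i k}

/-- `F` has (at most) simple poles along the hyperplanes `H_{i,k}`, `(i,k) ∈ P`: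
around every point `p`, multiplying `F` by the (finitely many) linear factors
`s_1+⋯+s_i−i+k` of the members of `P` passing through `p` yields a function
that extends analytically to a neighbourhood of `p`. -/
def SimplePolesAlong {r : ℕ} (P : Fin r → ℕ → Prop) (F : (Fin r → ℂ) → ℂ) : Prop :=
  ∀ p : Fin r → ℂ, ∀ T : Finset (Fin r × ℕ),
    (∀ i k, (i, k) ∈ T ↔ (P i k ∧ p ∈ Hplane r i k)) →
    ∃ (V : Set (Fin r → ℂ)) (G : (Fin r → ℂ) → ℂ),
      IsOpen V ∧ p ∈ V ∧ AnalyticOnNhd ℂ G V ∧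
      ∀ s ∈ V, s ∉ polarSet P →
        G s = (∏ q ∈ T, ((∑ j ∈ Finset.Iic q.1, s j) - ((q.1 : ℕ) + 1 : ℂ) + (q.2 : ℂ))) * F s

/-- From `(s_1,…,s_r)` (depth `r = r'+2`) and `c ∈ ℂ`, the depth-`(r−1)` tuple
`(s_1+s_2+c, s_3, …, s_r)`. -/
noncomputable def contractArgs {r : ℕ} (s : Fin (r + 2) → ℂ) (c : ℂ) : Fin (r + 1) → ℂ :=
  fun i => if i = 0 then s 0 + s 1 + c else s i.succ

/-- From `(λ_1,…,λ_r)` (depth `r = r'+2`), the depth-`(r−1)` tuple `(λ_1+λ_2, λ_3,…,λ_r)`. -/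
def contractLam {r : ℕ} (lam : Fin (r + 2) → ℝ) : Fin (r + 1) → ℝ :=
  fun i => if i = 0 then lam 0 + lam 1 else lam i.succ

/-- The real parts of the contracted exponents `(s_1 + s_2 + m, s_3, …, s_r)`: what remains of
`(s_1 + s_2 + k + 1, s_3, …, s_r)` after the surplus `k + 1 - m ≥ 0` is dropped. -/
noncomputable def shiftedExp {r : ℕ} (m : ℕ) (s : Fin (r + 2) → ℂ) (i : Fin (r + 1)) : ℝ :=
  (s i.succ).re + if i = 0 then (s 0).re + m else 0

lemma sum_Iic_shiftedExp {r : ℕ} (m : ℕ) (s : Fin (r + 2) → ℂ) (i : Fin (r + 1)) :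
    ∑ j ∈ Finset.Iic i, shiftedExp m s j = (∑ j ∈ Finset.Iic i.succ, s j).re + m := by
  have h : Finset.Iic i.succ = insert 0 ((Finset.Iic i).map (Fin.succEmb (r + 1))) := by
    rw [Fin.map_succEmb_Iic]
    ext x
    simp only [Finset.mem_Iic, Finset.mem_insert, Finset.mem_Ioc, Fin.pos_iff_ne_zero]
    by_cases hx : x = 0 <;> simp [hx]
  rw [h, Finset.sum_insert (by simp), Finset.sum_map]
  simp only [shiftedExp, Finset.sum_add_distrib, Finset.sum_ite_eq', Complex.add_re,
    Complex.re_sum, Fin.coe_succEmb]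
  simp
  ring

/-- Summation by parts: the lower bound carrying the induction for `sum_mul_nonneg`. -/
lemma last_mul_sum_le {n : ℕ} (τ L : Fin (n + 1) → ℝ) (hL : Antitone L)
    (hτ : ∀ i, 0 ≤ ∑ j ∈ Finset.Iic i, τ j) :
    L (Fin.last n) * ∑ i, τ i ≤ ∑ i, τ i * L i := by
  induction n with
  | zero => simp [mul_comm]
  | succ n ih =>
    rw [Fin.sum_univ_castSucc, Fin.sum_univ_castSucc (fun i => τ i * L i)]
    have h1 := ih (fun i => τ i.castSucc) (fun i => L i.castSucc)
      (fun a b hab => hL (Fin.castSucc_le_castSucc_iff.2 hab))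
      (fun i => by simpa only [Fin.sum_Iic_castSucc] using hτ i.castSucc)
    have h2 : 0 ≤ ∑ i : Fin (n + 1), τ i.castSucc := by
      have := hτ (Fin.last n).castSucc
      rw [Fin.sum_Iic_castSucc] at this
      rwa [show Finset.Iic (Fin.last n) = Finset.univ by ext x; simp [Fin.le_last]] at this
    have h3 : L (Fin.last (n + 1)) ≤ L (Fin.last n).castSucc := hL (Fin.le_last _)
    have h4 := mul_le_mul_of_nonneg_right h3 h2
    linarith [mul_comm (L (Fin.last (n + 1))) (τ (Fin.last (n + 1)))]

/-- A decreasing nonnegative sequence has nonnegative pairing with any sequence whose partial sums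
are nonnegative. -/
lemma sum_mul_nonneg {n : ℕ} (τ L : Fin (n + 1) → ℝ) (hL : Antitone L) (hL0 : ∀ i, 0 ≤ L i)
    (hτ : ∀ i, 0 ≤ ∑ j ∈ Finset.Iic i, τ j) : 0 ≤ ∑ i, τ i * L i := by
  refine le_trans (mul_nonneg (hL0 (Fin.last n)) ?_) (last_mul_sum_le τ L hL hτ)
  have := hτ (Fin.last n)
  rwa [show Finset.Iic (Fin.last n) = Finset.univ by ext x; simp [Fin.le_last]] at this

/-- On a compact subset of `U_{r+2}(m+1)`, the strict inequalities on the partial sums of the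
shifted exponents hold with a uniform multiplicative margin. -/
lemma exists_uniform_margin {r m : ℕ} {K : Set (Fin (r + 2) → ℂ)} (hK : IsCompact K)
    (hKU : K ⊆ Ur (r + 2) (m + 1)) :
    ∃ η : ℝ, 0 < η ∧ ∀ s ∈ K, ∀ i : Fin (r + 1),
      ((i : ℕ) + 1) * (1 + η) ≤ ∑ j ∈ Finset.Iic i, shiftedExp m s j := by
  have h : ∀ i : Fin (r + 1), ∃ c : ℝ, 0 < c ∧ ∀ s ∈ K,
      c ≤ (∑ j ∈ Finset.Iic i, shiftedExp m s j) / ((i : ℕ) + 1) - 1 := by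
    intro i
    refine hK.exists_forall_le' (Continuous.continuousOn ?_) ?_
    · simp only [sum_Iic_shiftedExp]
      fun_prop
    · intro s hs
      have := hKU hs i.succ
      rw [sub_pos, one_lt_div (by positivity), sum_Iic_shiftedExp]
      push_cast [Fin.val_succ] at this
      linarith
  choose c hc0 hc using h
  refine ⟨Finset.univ.inf' Finset.univ_nonempty c, ?_, ?_⟩
  · simpa using hc0
  · intro s hs i
    have h1 : Finset.univ.inf' Finset.univ_nonempty c ≤ c i :=
      Finset.inf'_le _ (Finset.mem_univ i)
    have h2 := hc i s hs
    have h3 : (0 : ℝ) < (i : ℕ) + 1 := by positivity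
    have h4 : 1 + Finset.univ.inf' Finset.univ_nonempty c ≤
        (∑ j ∈ Finset.Iic i, shiftedExp m s j) / ((i : ℕ) + 1) := by linarith
    rwa [le_div_iff₀ h3, mul_comm] at h4

lemma summable_prod_pi {f : ℕ → ℝ} (hf0 : ∀ n, 0 ≤ f n) (hf : Summable f) (n : ℕ) :
    Summable fun x : Fin n → ℕ => ∏ i, f (x i) := by
  induction n with
  | zero => exact Summable.of_finite
  | succ n ih =>
    rw [← (Fin.consEquiv fun _ : Fin (n + 1) => ℕ).summable_iff]
    have := hf.mul_of_nonneg ih hf0 (fun x => Finset.prod_nonneg fun i _ => hf0 (x i))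
    refine this.congr fun x => ?_
    simp [Fin.consEquiv, Fin.prod_univ_succ]

lemma norm_eR (a : ℝ) : ‖eR a‖ = 1 := by
  rw [eR, show (2 * Real.pi * Complex.I * a : ℂ) = ((2 * Real.pi * a : ℝ) : ℂ) * Complex.I by
    push_cast; ring]
  exact Complex.norm_exp_ofReal_mul_I _

lemma norm_rpowC (b : ℝ) (z : ℂ) : ‖rpowC b z‖ = Real.exp (z.re * Real.log b) := by
  simp [rpowC, Complex.norm_exp]

lemma norm_lerchTerm {r : ℕ} (lam al : Fin r → ℝ) (s : Fin r → ℂ) (n : Fin r → ℕ) :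
    ‖lerchTerm lam al s n‖ = Real.exp (-∑ i, (s i).re * Real.log (n i + al i)) := by
  simp [lerchTerm, norm_eR, norm_rpowC, Real.exp_neg, Real.exp_sum]

/-- The majorant of the Lerch term, independent of `s ∈ K` and of `k`. -/
lemma norm_lerchTerm_le {r m : ℕ} {η : ℝ} (hη : 0 < η) (lam : Fin (r + 1) → ℝ)
    {al : Fin (r + 1) → ℝ} (hal : ∀ i, al i ∈ Set.Ico (0 : ℝ) 1) {s : Fin (r + 2) → ℂ}
    (hs : ∀ i : Fin (r + 1), ((i : ℕ) + 1) * (1 + η) ≤ ∑ j ∈ Finset.Iic i, shiftedExp m s j)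
    {k : ℤ} (hk : (m : ℤ) - 1 ≤ k) (n : DTuple (r + 1)) :
    ‖lerchTerm lam al (contractArgs s ((k : ℂ) + 1)) n.1‖ ≤
      ∏ i, (n.1 i : ℝ) ^ (-(1 + η)) := by
  obtain ⟨n, hn, hn0⟩ := n
  have hn1 : ∀ i, (1 : ℝ) ≤ n i := fun i => by exact_mod_cast hn0 i
  set L : Fin (r + 1) → ℝ := fun i => Real.log (n i + al i) with hLdef
  have hL0 : ∀ i, 0 ≤ L i := fun i => Real.log_nonneg (by linarith [hn1 i, (hal i).1])
  have hL : Antitone L := by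
    intro i j hij
    rcases hij.eq_or_lt with rfl | hij
    · exact le_rfl
    · have h1 : (n j : ℝ) + 1 ≤ n i := by exact_mod_cast hn hij
      exact Real.log_le_log (by linarith [hn1 j, (hal j).1])
        (by linarith [(hal j).2, (hal i).1])
  have hre : ∀ i, shiftedExp m s i ≤ (contractArgs s ((k : ℂ) + 1) i).re := by
    intro i
    have hk' : (m : ℝ) ≤ k + 1 := by exact_mod_cast (by omega : (m : ℤ) ≤ k + 1)
    by_cases hi : i = 0
    · subst hi
      simp [shiftedExp, contractArgs]
      linarith
    · simp [shiftedExp, contractArgs, hi]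
  have hsum : 0 ≤ ∑ i, (shiftedExp m s i - (1 + η)) * L i := by
    refine sum_mul_nonneg _ L hL hL0 fun i => ?_
    rw [Finset.sum_sub_distrib]
    simp only [Finset.sum_const, Fin.card_Iic, nsmul_eq_mul]
    push_cast
    linarith [hs i]
  rw [norm_lerchTerm]
  calc Real.exp (-∑ i, (contractArgs s ((k : ℂ) + 1) i).re * L i)
      ≤ Real.exp (∑ i, -((1 + η) * Real.log (n i))) := by
        rw [Real.exp_le_exp, Finset.sum_neg_distrib, neg_le_neg_iff]
        simp only [sub_mul, Finset.sum_sub_distrib] at hsum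
        refine le_trans (le_trans ?_ (sub_nonneg.1 hsum)) ?_
        · refine Finset.sum_le_sum fun i _ => mul_le_mul_of_nonneg_left ?_ (by linarith)
          exact Real.log_le_log (by linarith [hn1 i]) (by linarith [(hal i).1])
        · gcongr with i
          · exact hL0 i
          · exact hre i
    _ = ∏ i, (n i : ℝ) ^ (-(1 + η)) := by
        rw [Real.exp_sum]
        refine Finset.prod_congr rfl fun i _ => ?_
        rw [Real.rpow_def_of_pos (by linarith [hn1 i])]
        ring_nf

/-- The value `M (M + 1) ⋯ (M + p - 1) / p!`, which bounds `(s)_{p-1}` when `|s| ≤ M`. -/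
noncomputable def pochBound (M : ℝ) (p : ℕ) : ℝ :=
  (∏ j ∈ Finset.range p, (M + j)) / p.factorial

lemma pochBound_pos {M : ℝ} (hM : 0 < M) (p : ℕ) : 0 < pochBound M p :=
  div_pos (Finset.prod_pos fun j _ => by positivity) (by positivity)

/-- The index shift `p = k + 1` absorbs the convention `(s)_{-1} = 1` into the empty product. -/
lemma norm_pochZ_le {M : ℝ} {s : ℂ} (hs : ‖s‖ ≤ M) {k : ℤ} (hk : -1 ≤ k) :
    ‖pochZ s k‖ ≤ pochBound M (k + 1).toNat := by
  have h : pochZ s k =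
      (∏ j ∈ Finset.range (k + 1).toNat, (s + j)) / ((k + 1).toNat.factorial : ℂ) := by
    rcases hk.eq_or_lt with rfl | hk
    · simp [pochZ]
    · have h0 : 0 ≤ k := by omega
      rw [pochZ, if_pos h0, show (k + 1).toNat = k.toNat + 1 by omega]
  rw [h, norm_div, norm_prod, Complex.norm_natCast, pochBound]
  gcongr with j
  refine (norm_add_le _ _).trans ?_
  rw [Complex.norm_natCast]
  gcongr

lemma summable_pochBound {M d : ℝ} (hM : 0 < M) (hd0 : 0 < d) (hd : d < 1) :
    Summable fun p : ℕ => pochBound M p * d ^ p := by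
  refine summable_of_ratio_test_tendsto_lt_one hd
    (Filter.Eventually.of_forall fun p => (mul_pos (pochBound_pos hM p) (by positivity)).ne') ?_
  have h : ∀ p : ℕ, ‖pochBound M (p + 1) * d ^ (p + 1)‖ / ‖pochBound M p * d ^ p‖ =
      d * (1 + (M - 1) * (1 / ((p : ℝ) + 1))) := by
    intro p
    have hb := pochBound_pos hM p
    have hr : pochBound M (p + 1) = pochBound M p * ((M + p) / (p + 1)) := by
      simp only [pochBound, Finset.prod_range_succ, Nat.factorial_succ]
      push_cast
      field_simp
    rw [Real.norm_of_nonneg (mul_pos (pochBound_pos hM _) (by positivity)).le,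
      Real.norm_of_nonneg (by positivity), hr]
    field_simp
    ring
  simp only [h]
  have := ((tendsto_one_div_add_atTop_nhds_zero_nat (𝕜 := ℝ)).const_mul (M - 1)).const_add 1
    |>.const_mul d
  simpa using this

/-- For `m ≥ 0`, `r ≥ 2`, `μ_2 := λ_1+λ_2`, and every compact `K ⊆ U_r(m+1)`, the family
`(s_1,…,s_r) ↦ (s_1)_k (α_2−α_1)^{k+1} e(μ_2 n_2) e(λ_3 n_3)⋯e(λ_r n_r) /
((n_2+α_2)^{s_1+s_2+k+1}(n_3+α_3)^{s_3}⋯(n_r+α_r)^{s_r})`,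
indexed by tuples `n_2 > ⋯ > n_r > 0` and integers `k ≥ m−1`,
converges normally on `K`. -/
theorem stmt_5 (m r : ℕ) (lam al : Fin (r + 2) → ℝ)
    (hlam : ∀ i, lam i ∈ Set.Ico (0 : ℝ) 1) (hal : ∀ i, al i ∈ Set.Ico (0 : ℝ) 1)
    (K : Set (Fin (r + 2) → ℂ)) (hK : IsCompact K) (hKU : K ⊆ Ur (r + 2) (m + 1)) :
    Summable (fun x : DTuple (r + 1) × {k : ℤ // (m : ℤ) - 1 ≤ k} =>
      ⨆ s : K, ‖pochZ (s.1 0) x.2.1 * (((al 1 - al 0) ^ (x.2.1 + 1) : ℝ) : ℂ) *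
        lerchTerm (contractLam lam) (fun i => al i.succ)
          (contractArgs s.1 ((x.2.1 : ℂ) + 1)) x.1.1‖) := by
  obtain ⟨η, hη, hmargin⟩ := exists_uniform_margin hK hKU
  obtain ⟨M, hM0, hM⟩ : ∃ M : ℝ, 0 < M ∧ ∀ s ∈ K, ‖s 0‖ ≤ M := by
    obtain ⟨M, hM0, hM⟩ := hK.isBounded.exists_pos_norm_le
    exact ⟨M, hM0, fun s hs => (norm_le_pi_norm s 0).trans (hM s hs)⟩
  -- A positive `d` keeps the ratio test applicable when `al 1 = al 0`.
  obtain ⟨d, hd0, hd1, hd⟩ : ∃ d : ℝ, 0 < d ∧ d < 1 ∧ |al 1 - al 0| ≤ d := by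
    have : |al 1 - al 0| < 1 :=
      abs_lt.2 ⟨by linarith [(hal 0).2, (hal 1).1], by linarith [(hal 0).1, (hal 1).2]⟩
    exact ⟨max |al 1 - al 0| (1 / 2), by positivity, max_lt this (by norm_num), le_max_left _ _⟩
  have hf : Summable fun n : DTuple (r + 1) => ∏ i, (n.1 i : ℝ) ^ (-(1 + η)) :=
    (summable_prod_pi (fun n => by positivity)
      (Real.summable_nat_rpow.2 (by linarith)) (r + 1)).comp_injective Subtype.val_injective
  have hg : Summable fun k : {k : ℤ // (m : ℤ) - 1 ≤ k} =>
      pochBound M (k.1 + 1).toNat * d ^ (k.1 + 1).toNat := by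
    refine (summable_pochBound hM0 hd0 hd1).comp_injective
      (i := fun k : {k : ℤ // (m : ℤ) - 1 ≤ k} => (k.1 + 1).toNat) ?_
    rintro ⟨k, hk⟩ ⟨l, hl⟩ h
    simp only at h
    exact Subtype.ext (by simp only; omega)
  have hf0 : ∀ n : DTuple (r + 1), 0 ≤ ∏ i, (n.1 i : ℝ) ^ (-(1 + η)) :=
    fun n => Finset.prod_nonneg fun i _ => by positivity
  have hg0 : ∀ k : {k : ℤ // (m : ℤ) - 1 ≤ k},
      0 ≤ pochBound M (k.1 + 1).toNat * d ^ (k.1 + 1).toNat :=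
    fun k => mul_nonneg (pochBound_pos hM0 _).le (by positivity)
  refine Summable.of_nonneg_of_le (fun x => Real.iSup_nonneg fun s => norm_nonneg _) (fun x => ?_)
    (hf.mul_of_nonneg hg hf0 hg0)
  obtain ⟨n, k, hk⟩ := x
  refine Real.iSup_le (fun s => ?_) (mul_nonneg (hf0 n) (hg0 ⟨k, hk⟩))
  have h1 := norm_lerchTerm_le hη (contractLam lam) (fun i => hal i.succ) (hmargin s.1 s.2) hk n
  have h2 := norm_pochZ_le (hM s.1 s.2) (by omega : -1 ≤ k)
  have h3 : ‖(((al 1 - al 0) ^ (k + 1) : ℝ) : ℂ)‖ ≤ d ^ (k + 1).toNat := by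
    have hp : k + 1 = ((k + 1).toNat : ℤ) := by omega
    rw [Complex.norm_real, Real.norm_eq_abs, hp, zpow_natCast, abs_pow, Int.toNat_natCast]
    gcongr
  rw [norm_mul, norm_mul, mul_comm]
  have := pochBound_pos hM0 (k + 1).toNat
  gcongr
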